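/- Draw-and-delete commutes with arrangement via uniform deletion: for every multiset m : Sym X (K+1), (DD m).bind arr = (arr m).bind del, as distributions on Fin K → X. -/

import Mathlib

universe u

/-- Accumulation: send a tuple to its multiset of values. -/
def acc {X : Type u} {K : ℕ} (v : Fin K → X) : Sym X K :=
  ⟨(List.ofFn v : List X), by simp⟩

/-- Pushforward of the uniform distribution on permutations under `σ ↦ v ∘ σ`. -/
noncomputable def perm {X : Type u} {K : ℕ} (v : Fin K → X) : PMF (Fin K → X) :=
  PMF.map (fun σ => v ∘ σ) (PMF.uniformOfFintype (Equiv.Perm (Fin K)))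

/-- Uniform deletion of one coordinate: pushforward of the uniform distribution
on `Fin (K+1)` under `i ↦ v ∘ Fin.succAbove i`. -/
noncomputable def del {X : Type u} {K : ℕ} (v : Fin (K + 1) → X) : PMF (Fin K → X) :=
  PMF.map (fun i => v ∘ Fin.succAbove i) (PMF.uniformOfFintype (Fin (K + 1)))

/-!
Let `τ` be a uniform permutation of `Fin (K + 1)` and fix a position `j`. Then `i = τ j` is
uniform, and given `i` the values of `τ` off `j` form a uniformly random arrangement of the
remaining indices. So deleting the *fixed* position `j` from a random arrangement of `v` already
has the law of deleting a uniform entry of `v` and then arranging the rest; averaging over `j`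
changes nothing.
-/

theorem acc_surjective {X : Type u} {K : ℕ} :
    Function.Surjective (acc : (Fin K → X) → Sym X K) := by
  rintro ⟨⟨l⟩, rfl : l.length = K⟩
  exact ⟨l.get, Subtype.ext (congrArg Multiset.ofList (List.ofFn_get l))⟩

/- In `perm`, the binder `σ` is elaborated as a plain function and the uniform law is coerced
monadically from permutations to functions. -/
theorem perm_eq_map_uniformOfFintype {X : Type u} {K : ℕ} (v : Fin K → X) :
    perm v = PMF.map (fun σ : Equiv.Perm (Fin K) => v ∘ ⇑σ)
      (PMF.uniformOfFintype (Equiv.Perm (Fin K))) :=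
  PMF.map_comp _ _ _

section Uniform

variable {α β : Type*} [Fintype α] [Nonempty α] [Fintype β] [Nonempty β]

theorem map_uniformOfFintype_of_bijective {f : α → β} (hf : Function.Bijective f) :
    PMF.map f (PMF.uniformOfFintype α) = PMF.uniformOfFintype β := by
  ext b
  obtain ⟨a, rfl⟩ := hf.surjective b
  rw [PMF.map_apply, tsum_eq_single a fun a' ha' => if_neg (hf.injective.ne ha'.symm), if_pos rfl,
    PMF.uniformOfFintype_apply, PMF.uniformOfFintype_apply, Fintype.card_of_bijective hf]

theorem uniformOfFintype_prod :
    PMF.uniformOfFintype (α × β) =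
      (PMF.uniformOfFintype α).bind fun a => (PMF.uniformOfFintype β).map (Prod.mk a) := by
  classical
  ext ⟨a, b⟩
  simp [PMF.bind_apply, PMF.map_apply, Prod.ext_iff, ite_and, ENNReal.mul_inv]

end Uniform

/-- The permutation of `Fin (n + 1)` that sends `j` to `i` and acts as `σ` off `j`, where the
complements of `j` and of `i` are both identified with `Fin n` in increasing order. -/
def insertPerm {n : ℕ} (j i : Fin (n + 1)) (σ : Equiv.Perm (Fin n)) : Equiv.Perm (Fin (n + 1)) :=
  ((finSuccEquiv' j).trans σ.optionCongr).trans (finSuccEquiv' i).symm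

section InsertPerm

variable {n : ℕ} (j : Fin (n + 1))

theorem insertPerm_apply_self (i : Fin (n + 1)) (σ : Equiv.Perm (Fin n)) :
    insertPerm j i σ j = i := by
  simp [insertPerm]

theorem insertPerm_comp_succAbove (i : Fin (n + 1)) (σ : Equiv.Perm (Fin n)) :
    insertPerm j i σ ∘ j.succAbove = i.succAbove ∘ σ := by
  ext k
  simp [insertPerm]

theorem insertPerm_bijective : Function.Bijective (Function.uncurry (insertPerm j)) := by
  refine (Fintype.bijective_iff_injective_and_card _).2
    ⟨?_, by simp [Fintype.card_perm, Nat.factorial_succ]⟩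
  rintro ⟨i, σ⟩ ⟨i', σ'⟩ (h : insertPerm j i σ = insertPerm j i' σ')
  obtain rfl : i = i' := by
    rw [← insertPerm_apply_self j i σ, h, insertPerm_apply_self]
  have hcomp : i.succAbove ∘ σ = i.succAbove ∘ σ' := by
    rw [← insertPerm_comp_succAbove j, h, insertPerm_comp_succAbove]
  rw [DFunLike.coe_injective (Fin.succAbove_right_injective.comp_left hcomp)]

theorem uniformOfFintype_perm_succ :
    PMF.uniformOfFintype (Equiv.Perm (Fin (n + 1))) =
      (PMF.uniformOfFintype (Fin (n + 1))).bind fun i =>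
        (PMF.uniformOfFintype (Equiv.Perm (Fin n))).map (insertPerm j i) := by
  rw [← map_uniformOfFintype_of_bijective (insertPerm_bijective j), uniformOfFintype_prod,
    PMF.map_bind]
  simp only [PMF.map_comp]
  rfl

end InsertPerm

theorem map_comp_succAbove_perm {X : Type u} {K : ℕ} (v : Fin (K + 1) → X) (j : Fin (K + 1)) :
    (perm v).map (· ∘ j.succAbove) = (del v).bind perm := by
  rw [perm_eq_map_uniformOfFintype, uniformOfFintype_perm_succ j, PMF.map_comp, PMF.map_bind, del,
    PMF.bind_map]
  congr 1 with i : 1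
  rw [PMF.map_comp, Function.comp_apply, perm_eq_map_uniformOfFintype]
  congr 1 with σ : 1
  exact congrArg (v ∘ ·) (insertPerm_comp_succAbove j i σ)

theorem perm_bind_del {X : Type u} {K : ℕ} (v : Fin (K + 1) → X) :
    (perm v).bind del = (del v).bind perm :=
  calc (perm v).bind del
    _ = (PMF.uniformOfFintype (Fin (K + 1))).bind fun j => (perm v).map (· ∘ j.succAbove) :=
        PMF.bind_comm _ _ fun w (j : Fin (K + 1)) => PMF.pure (w ∘ j.succAbove)
    _ = (del v).bind perm := by
        simp only [map_comp_succAbove_perm, PMF.bind_const]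

/-- Draw-and-delete commutes with arrangement via uniform deletion:
drawing-and-deleting and then arranging equals arranging and then uniformly
deleting a coordinate. -/
theorem DD_bind_arr {X : Type u} {K : ℕ}
    (arr : {n : ℕ} → Sym X n → PMF (Fin n → X))
    (harr : ∀ {n : ℕ} (v : Fin n → X), arr (acc v) = perm v)
    (DD : Sym X (K + 1) → PMF (Sym X K))
    (hDD : ∀ v : Fin (K + 1) → X, DD (acc v) = PMF.map acc (del v))
    (m : Sym X (K + 1)) :
    (DD m).bind arr = (arr m).bind del := by
  obtain ⟨v, rfl⟩ := acc_surjective m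
  have harr_acc : arr ∘ acc = (perm : (Fin K → X) → PMF (Fin K → X)) := funext harr
  rw [hDD, harr, PMF.bind_map, harr_acc, perm_bind_del]
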